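/- arXiv:2209.05334 — 3 statements merged into one kernel-verified Lean document; each statement's English description precedes it below -/
import Mathlib

section
/- If v, w ∈ A* satisfy v ∼ w, then for every α ∈ {0,1}*: v∘α is defined if and only if w∘α is defined, and in that case v∘α ∼ w∘α; moreover for every nonempty α ∈ {0,1}⁺, v∗α is defined if and only if w∗α is defined, and in that case v∗α = w∗α. (Hence ∘ and ∗ induce well-defined partial maps on the free band with identity A*/∼.) -/
/-!
The idea is to describe `w ∘ 0` and `w ∗ 0` by data that visibly respect `∼`.

* For every predicate `p`, the longest prefix `w.takeWhile p` of letters satisfying `p` respects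
  `∼` (`Sim.takeWhile`): the prefix of `u ++ u'` is that of `u`, or `u` followed by that of `u'`,
  and which case occurs depends only on the content of `u`, which is `∼`-invariant.
* A nonempty word factors as `w = p ++ a :: s`, where `a` is the letter whose first occurrence comes
  last: `a ∉ p` and `cont s ⊆ cont p ∪ {a}`. Then `w ∗ 0 = a` and `w ∘ 0 = p` is the longest prefix
  avoiding `a` (`exists_last_letter`).
* This `a` is the only letter of `w` such that every other letter of `w` occurs in the longest
  `a`-avoiding prefix of `w` (`last_letter_unique`). By the first point the property passes between
  equivalent words, so `w ∗ 0`, and hence `w ∘ 0` up to `∼`, depends only on the class of `w`.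

The maps `∘ 1` and `∗ 1` follow by reversal, and general exponents by induction on their length.
-/

/-!
Common definitions: words over an alphabet `A` are `List A`; the free monoid
operation is `++` with identity `[]`.  `false` plays the role of `0` and
`true` the role of `1` in `{0,1}*`.
-/

namespace FreeBand

variable {A : Type*}

/-- The content of a word: the set of letters occurring in it. -/
def cont [DecidableEq A] (w : List A) : Finset A := w.toFinset

/-- The length of the longest prefix of `w` whose content has one fewer letter
than the content of `w`. -/
def prefLen [DecidableEq A] (w : List A) : ℕ :=
  Nat.findGreatest (fun k => (cont (w.take k)).card = (cont w).card - 1) w.length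

/-- `w ∘ 0`: the longest prefix of `w` whose content has one fewer letter than
that of `w`; undefined (`none`) on the empty word. -/
def circ0 [DecidableEq A] (w : List A) : Option (List A) :=
  if w = [] then none else some (w.take (prefLen w))

/-- `w ∗ 0`: the letter of `w` immediately following the prefix `w ∘ 0`. -/
def star0 [DecidableEq A] (w : List A) : Option A := w[prefLen w]?

/-- `w ∘ 1`: the longest suffix of `w` whose content has one fewer letter than
that of `w` (obtained by reversal from `circ0`); undefined on the empty word. -/
def circ1 [DecidableEq A] (w : List A) : Option (List A) :=
  (circ0 w.reverse).map List.reverse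

/-- `w ∗ 1`: the letter of `w` immediately preceding the suffix `w ∘ 1`. -/
def star1 [DecidableEq A] (w : List A) : Option A := star0 w.reverse

/-- `w ∘ b` for a single letter `b ∈ {0,1}` (`false = 0`, `true = 1`). -/
def circb [DecidableEq A] (w : List A) (b : Bool) : Option (List A) :=
  bif b then circ1 w else circ0 w

/-- `w ∗ b` for a single letter `b ∈ {0,1}` (`false = 0`, `true = 1`). -/
def starb [DecidableEq A] (w : List A) (b : Bool) : Option A :=
  bif b then star1 w else star0 w

/-- The partial map `∘ : A* × {0,1}* → A*`:  `w ∘ ε = w` and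
`w ∘ (βγ) = (w ∘ β) ∘ γ`; any expression with an undefined subterm is undefined. -/
def circw [DecidableEq A] : List A → List Bool → Option (List A)
  | w, [] => some w
  | w, b :: α => (circb w b).bind fun v => circw v α

/-- The partial map `∗ : A* × {0,1}* → A`:  `w ∗ ε = ⊥`, `w ∗ β` for a single
letter `β` is given by `starb`, and `w ∗ (βγ) = (w ∘ β) ∗ γ` for `γ ≠ ε`. -/
def starw [DecidableEq A] : List A → List Bool → Option A
  | _, [] => none
  | w, [b] => starb w b
  | w, b :: α => (circb w b).bind fun v => starw v α

/-- The least congruence `∼` on the free monoid `A*` containing `(w², w)` for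
every word `w ∈ A*`. -/
inductive Sim : List A → List A → Prop
  | sq (w : List A) : Sim (w ++ w) w
  | refl (w : List A) : Sim w w
  | symm {u v : List A} : Sim u v → Sim v u
  | trans {u v w : List A} : Sim u v → Sim v w → Sim u w
  | append {u v u' v' : List A} : Sim u v → Sim u' v' → Sim (u ++ u') (v ++ v')

/-- The partial function `f_w : {0,1}* → A*`:  `f_ε(ε) = ε`, `f_ε(α) = ⊥` for
`α ≠ ε`, `f_w(ε) = ⊥` for `w ≠ ε`, and `f_w(βγ) = (w ∗ β) · f_{w ∘ β}(γ)`. -/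
def fword [DecidableEq A] : List A → List Bool → Option (List A)
  | w, [] => if w = [] then some [] else none
  | w, b :: γ =>
      (starb w b).bind fun a =>
        (circb w b).bind fun v =>
          (fword v γ).map fun u => a :: u

/-- `K₀(v, w)`: the least `k ≥ 1` such that `w ∗ 0^k` is defined and does not
belong to `cont v`, if such `k` exists; undefined otherwise. -/
noncomputable def K0 [DecidableEq A] (v w : List A) : Option ℕ :=
  letI : DecidablePred fun k =>
      1 ≤ k ∧ ∃ a, starw w (List.replicate k false) = some a ∧ a ∉ cont v :=
    Classical.decPred _
  letI : Decidable (∃ k, 1 ≤ k ∧ ∃ a,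
      starw w (List.replicate k false) = some a ∧ a ∉ cont v) := Classical.dec _
  if h : ∃ k, 1 ≤ k ∧ ∃ a, starw w (List.replicate k false) = some a ∧ a ∉ cont v
  then some (Nat.find h) else none

/-- `K₁(v, w)`: the least `l ≥ 1` such that `v ∗ 1^l` is defined and does not
belong to `cont w`, if such `l` exists; undefined otherwise. -/
noncomputable def K1 [DecidableEq A] (v w : List A) : Option ℕ :=
  letI : DecidablePred fun l =>
      1 ≤ l ∧ ∃ a, starw v (List.replicate l true) = some a ∧ a ∉ cont w :=
    Classical.decPred _
  letI : Decidable (∃ l, 1 ≤ l ∧ ∃ a,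
      starw v (List.replicate l true) = some a ∧ a ∉ cont w) := Classical.dec _
  if h : ∃ l, 1 ≤ l ∧ ∃ a, starw v (List.replicate l true) = some a ∧ a ∉ cont w
  then some (Nat.find h) else none

/-- `m` is the short-lex least word `∼`-equivalent to `w`:  `m ∼ w` and `m` is
`≤` every word `∼`-equivalent to `w` in the short-lex order (length first, then
lexicographic order induced by the linear order on `A`). -/
def IsMinRep [LinearOrder A] (w m : List A) : Prop :=
  Sim m w ∧ ∀ u : List A, Sim u w →
    m = u ∨ m.length < u.length ∨ (m.length = u.length ∧ List.Lex (· < ·) m u)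

theorem Sim.mem_iff {v w : List A} (h : Sim v w) (x : A) : x ∈ v ↔ x ∈ w := by
  induction h with
  | sq w => simp
  | refl w => rfl
  | symm _ ih => exact ih.symm
  | trans _ _ ih1 ih2 => exact ih1.trans ih2
  | append _ _ ih1 ih2 => simp [ih1, ih2]

theorem Sim.reverse {v w : List A} (h : Sim v w) : Sim v.reverse w.reverse := by
  induction h with
  | sq w => simpa using Sim.sq w.reverse
  | refl w => exact .refl _
  | symm _ ih => exact ih.symm
  | trans _ _ ih1 ih2 => exact ih1.trans ih2
  | append _ _ ih1 ih2 => simpa using ih2.append ih1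

theorem takeWhile_append_of_all {p : A → Bool} {u : List A} (h : ∀ x ∈ u, p x) (v : List A) :
    (u ++ v).takeWhile p = u ++ v.takeWhile p :=
  List.takeWhile_append_of_pos h

theorem takeWhile_append_of_not_all {p : A → Bool} {u : List A} (h : ¬ ∀ x ∈ u, p x)
    (v : List A) : (u ++ v).takeWhile p = u.takeWhile p := by
  induction u with
  | nil => simp at h
  | cons x u ih =>
    by_cases hx : p x
    · have hu : ¬ ∀ y ∈ u, p y := fun hu => h (by simpa [hx] using hu)
      simp [hx, ih hu]
    · simp [hx]

theorem Sim.takeWhile (p : A → Bool) {v w : List A} (h : Sim v w) :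
    Sim (v.takeWhile p) (w.takeWhile p) := by
  induction h with
  | sq w =>
    by_cases hw : ∀ x ∈ w, p x
    · rw [takeWhile_append_of_all hw, List.takeWhile_eq_self_iff.2 hw]
      exact .sq w
    · rw [takeWhile_append_of_not_all hw]
      exact .refl _
  | refl w => exact .refl _
  | symm _ ih => exact ih.symm
  | trans _ _ ih1 ih2 => exact ih1.trans ih2
  | @append u v u' v' huv _ ih1 ih2 =>
    by_cases hu : ∀ x ∈ u, p x
    · have hv : ∀ x ∈ v, p x := fun x hx => hu x ((huv.mem_iff x).2 hx)
      rw [takeWhile_append_of_all hu, takeWhile_append_of_all hv]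
      exact huv.append ih2
    · have hv : ¬ ∀ x ∈ v, p x := fun hv => hu fun x hx => hv x ((huv.mem_iff x).1 hx)
      rw [takeWhile_append_of_not_all hu, takeWhile_append_of_not_all hv]
      exact ih1

/-- A nonempty word factors at the first occurrence of the letter that is last to appear. -/
theorem exists_factorization {w : List A} (hw : w ≠ []) :
    ∃ p a s, w = p ++ a :: s ∧ a ∉ p ∧ ∀ x ∈ s, x ∈ p ∨ x = a := by
  induction w using List.reverseRecOn with
  | nil => exact absurd rfl hw
  | append_singleton w b ih =>
    by_cases hb : b ∈ w
    · obtain ⟨p, a, s, rfl, ha, hs⟩ := ih (List.ne_nil_of_mem hb)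
      refine ⟨p, a, s ++ [b], by simp, ha, fun x hx => ?_⟩
      grind
    · exact ⟨w, b, [], rfl, hb, by simp⟩

theorem prefLen_factorization [DecidableEq A] {p s : List A} {a : A} (ha : a ∉ p)
    (hs : ∀ x ∈ s, x ∈ p ∨ x = a) : prefLen (p ++ a :: s) = p.length := by
  have hfull : cont (p ++ a :: s) = insert a (cont p) := by
    ext x
    simp only [cont, List.mem_toFinset, Finset.mem_insert, List.mem_append, List.mem_cons]
    grind
  have hcard : (cont (p ++ a :: s)).card = (cont p).card + 1 := by
    rw [hfull, Finset.card_insert_of_notMem (by simpa [cont] using ha)]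
  unfold prefLen
  rw [Nat.findGreatest_eq_iff]
  refine ⟨by simp, fun _ => ?_, fun n hn _ => ?_⟩
  · rw [hcard, List.take_left]
    rfl
  · -- a prefix longer than `p` contains `p ++ [a]`, hence every letter of the word
    have hsub : insert a (cont p) ⊆ cont ((p ++ a :: s).take n) := by
      obtain ⟨m, rfl⟩ := Nat.exists_eq_add_of_lt hn
      have htake : (p ++ a :: s).take (p.length + m + 1) = p ++ a :: s.take m := by
        rw [add_assoc, List.take_length_add_append, List.take_succ_cons]
      rw [htake]
      intro x
      simp only [cont, List.mem_toFinset, Finset.mem_insert, List.mem_append, List.mem_cons]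
      tauto
    have hle := Finset.card_le_card hsub
    rw [← hfull] at hle
    omega

/-- The letter `w ∗ 0` is the one whose first occurrence in `w` comes last, and `w ∘ 0` is the
longest prefix avoiding it. -/
theorem exists_last_letter [DecidableEq A] {w : List A} (hw : w ≠ []) :
    ∃ a, star0 w = some a ∧ circ0 w = some (w.takeWhile (· ≠ a)) ∧ a ∈ w ∧
      ∀ b ∈ w, b ≠ a → b ∈ w.takeWhile (· ≠ a) := by
  obtain ⟨p, a, s, rfl, ha, hs⟩ := exists_factorization hw
  have hlen := prefLen_factorization ha hs
  have htw : (p ++ a :: s).takeWhile (· ≠ a) = p := by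
    rw [takeWhile_append_of_all (by grind)]
    simp
  refine ⟨a, ?_, ?_, by simp, ?_⟩
  · simp [star0, hlen]
  · rw [htw]
    simp [circ0, hlen]
  · rw [htw]
    grind

/-- Two letters cannot each occur before the first occurrence of the other, so the letter
provided by `exists_last_letter` is unique. -/
theorem last_letter_unique [DecidableEq A] {w : List A} {a b : A}
    (h1 : b ≠ a → b ∈ w.takeWhile (· ≠ a)) (h2 : a ≠ b → a ∈ w.takeWhile (· ≠ b)) : a = b := by
  by_contra hab
  have hb := h1 (Ne.symm hab)
  have ha := h2 hab
  have hna : a ∉ w.takeWhile (· ≠ a) := fun h => by simpa using List.mem_takeWhile_imp h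
  have hnb : b ∉ w.takeWhile (· ≠ b) := fun h => by simpa using List.mem_takeWhile_imp h
  -- both words are prefixes of `w`, so one contains the other
  rcases List.prefix_or_prefix_of_prefix (List.takeWhile_prefix (l := w) (· ≠ a))
    (List.takeWhile_prefix (l := w) (· ≠ b)) with h | h
  · exact hnb (h.subset hb)
  · exact hna (h.subset ha)

theorem Sim.eq_nil_iff {v w : List A} (h : Sim v w) : v = [] ↔ w = [] := by
  simp only [List.eq_nil_iff_forall_not_mem, h.mem_iff]

theorem Sim.circ0_star0 [DecidableEq A] {v w : List A} (h : Sim v w) :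
    Option.Rel Sim (circ0 v) (circ0 w) ∧ star0 v = star0 w := by
  by_cases hv : v = []
  · obtain rfl := h.eq_nil_iff.1 hv
    subst hv
    exact ⟨by simp [circ0], rfl⟩
  · obtain ⟨a, hsa, hca, ham, ha⟩ := exists_last_letter hv
    obtain ⟨b, hsb, hcb, hbm, hb⟩ := exists_last_letter (mt h.eq_nil_iff.2 hv)
    have hab : a = b := last_letter_unique (w := w)
      (fun hne => ((h.takeWhile _).mem_iff b).1 (ha b ((h.mem_iff b).2 hbm) hne))
      (hb a ((h.mem_iff a).1 ham))
    subst hab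
    rw [hsa, hsb, hca, hcb]
    exact ⟨.some (h.takeWhile _), rfl⟩

theorem Sim.circb [DecidableEq A] {v w : List A} (h : Sim v w) (b : Bool) :
    Option.Rel Sim (circb v b) (circb w b) := by
  cases b with
  | false => exact h.circ0_star0.1
  | true =>
    have hr := h.reverse.circ0_star0.1
    simp only [FreeBand.circb, circ1, cond_true]
    generalize circ0 v.reverse = x at hr ⊢
    generalize circ0 w.reverse = y at hr ⊢
    cases hr with
    | none => exact .none
    | some hr => exact .some hr.reverse

theorem Sim.starb [DecidableEq A] {v w : List A} (h : Sim v w) (b : Bool) :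
    starb v b = starb w b := by
  cases b with
  | false => exact h.circ0_star0.2
  | true => exact h.reverse.circ0_star0.2

theorem Sim.circw [DecidableEq A] (α : List Bool) {v w : List A} (h : Sim v w) :
    Option.Rel Sim (circw v α) (circw w α) := by
  induction α generalizing v w with
  | nil => exact .some h
  | cons b α ih =>
    have hb := h.circb b
    simp only [FreeBand.circw]
    generalize FreeBand.circb v b = x at hb ⊢
    generalize FreeBand.circb w b = y at hb ⊢
    cases hb with
    | none => exact .none
    | some hb => exact ih hb

theorem Sim.starw [DecidableEq A] (α : List Bool) {v w : List A} (h : Sim v w) :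
    starw v α = starw w α := by
  induction α generalizing v w with
  | nil => rfl
  | cons b α ih =>
    cases α with
    | nil => exact h.starb b
    | cons c α =>
      have hb := h.circb b
      simp only [FreeBand.starw]
      generalize FreeBand.circb v b = x at hb ⊢
      generalize FreeBand.circb w b = y at hb ⊢
      cases hb with
      | none => rfl
      | some hb => exact ih hb

/-- If `v ∼ w` then for every `α ∈ {0,1}*`, `v ∘ α` is defined iff `w ∘ α` is,
and in that case `v ∘ α ∼ w ∘ α`; and for every nonempty `α ∈ {0,1}⁺`,
`v ∗ α` is defined iff `w ∗ α` is, and in that case they are equal. -/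
theorem circ_star_respect_sim [Nonempty A] [DecidableEq A] {v w : List A}
    (h : Sim v w) :
    (∀ α : List Bool, Option.Rel Sim (circw v α) (circw w α)) ∧
    (∀ α : List Bool, α ≠ [] → starw v α = starw w α) := by
  exact ⟨fun α => h.circw α, fun α _ => h.starw α⟩

end FreeBand
end

section
/- Let v, w ∈ A⁺ be nonempty words. Then: (a) if w∗0 ∉ cont(v), then (vw)∘0 = v·(w∘0) and (vw)∗0 = w∗0; (b) if w∗0 ∈ cont(v), then (vw)∘0 = (v·(w∘0))∘0 and (vw)∗0 = (v·(w∘0))∗0; (c) if v∗1 ∉ cont(w), then (vw)∘1 = (v∘1)·w and (vw)∗1 = v∗1; (d) if v∗1 ∈ cont(w), then (vw)∘1 = ((v∘1)·w)∘1 and (vw)∗1 = ((v∘1)·w)∗1. -/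
/-!
A nonempty word factors as `w = p a s`, where `a` does not occur in `p` and every letter of `s`
occurs in `p a`: take for `a` the letter whose first occurrence comes last. The prefix `p` misses
exactly one letter of `w`, and any longer prefix misses none, so for every such factorization
`w ∘ 0 = p` and `w ∗ 0 = a` (`Fact0.circ0_eq`, `Fact0.star0_eq`).

If `a` does not occur in `v`, then `v w = (v p) a s` is such a factorization of `v w`. If `a`
occurs in `v`, then `a s` adds no letter to `v p`, so a factorization `v p = q c t` extends to
`v w = q c (t a s)`. The statements about `∘ 1` and `∗ 1` follow by reversing words.
-/

/-!
Common definitions: words over an alphabet `A` are `List A`; the free monoid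
operation is `++` with identity `[]`.  `false` plays the role of `0` and
`true` the role of `1` in `{0,1}*`.
-/

namespace FreeBand

variable {A : Type*}

/-- `Fact0 w p a s` says that `w = p a s` where `a` does not occur in `p` and every letter of `s`
occurs in `p a`; thus `a` is the letter of `w` whose first occurrence comes last. -/
def Fact0 (w p : List A) (a : A) (s : List A) : Prop :=
  w = p ++ a :: s ∧ a ∉ p ∧ ∀ x ∈ s, x ∈ p ∨ x = a

theorem exists_fact0 (w : List A) (hw : w ≠ []) : ∃ p a s, Fact0 w p a s := by
  classical
  induction w using List.reverseRecOn with
  | nil => exact absurd rfl hw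
  | append_singleton l x ih =>
    by_cases hx : x ∈ l
    · obtain ⟨p, a, s, rfl, ha, hs⟩ := ih (List.ne_nil_of_mem hx)
      refine ⟨p, a, s ++ [x], by simp, ha, ?_⟩
      intro y hy
      simp only [List.mem_append, List.mem_cons, List.not_mem_nil, or_false] at hy hx
      grind
    · exact ⟨l, x, [], rfl, hx, by simp⟩

theorem Fact0.prefLen_eq [DecidableEq A] {w p s : List A} {a : A} (h : Fact0 w p a s) :
    prefLen w = p.length := by
  obtain ⟨rfl, ha, hs⟩ := h
  have hc : cont (p ++ a :: s) = insert a (cont p) := by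
    ext x
    simp only [cont, List.mem_toFinset, List.mem_append, List.mem_cons, Finset.mem_insert]
    grind
  have ha' : a ∉ cont p := by simpa [cont] using ha
  unfold prefLen
  rw [Nat.findGreatest_eq_iff, hc, Finset.card_insert_of_notMem ha']
  refine ⟨by simp, fun _ => by simp, fun n hn _ hcard => ?_⟩
  -- A prefix longer than `p` contains `p a`, hence has the full content.
  have hsub : insert a (cont p) ⊆ cont ((p ++ a :: s).take n) := by
    obtain ⟨k, rfl⟩ : ∃ k, n = p.length + (k + 1) := ⟨n - p.length - 1, by omega⟩
    rw [List.take_length_add_append, List.take_succ_cons]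
    intro x hx
    simp only [cont, List.mem_toFinset, List.mem_append, List.mem_cons,
      Finset.mem_insert] at hx ⊢
    tauto
  have := Finset.card_le_card hsub
  rw [Finset.card_insert_of_notMem ha'] at this
  omega

theorem Fact0.circ0_eq [DecidableEq A] {w p s : List A} {a : A} (h : Fact0 w p a s) :
    circ0 w = some p := by
  have hl := h.prefLen_eq
  obtain ⟨rfl, -, -⟩ := h
  simp [circ0, hl]

theorem Fact0.star0_eq [DecidableEq A] {w p s : List A} {a : A} (h : Fact0 w p a s) :
    star0 w = some a := by
  have hl := h.prefLen_eq
  obtain ⟨rfl, -, -⟩ := h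
  simp [star0, hl]

theorem circ0_star0_append_of_notMem [DecidableEq A] (v w : List A) (hw : w ≠ []) (a : A)
    (ha : star0 w = some a) (hav : a ∉ cont v) :
    circ0 (v ++ w) = (circ0 w).map (fun p => v ++ p) ∧ star0 (v ++ w) = star0 w := by
  obtain ⟨p, b, s, h⟩ := exists_fact0 w hw
  obtain rfl : b = a := Option.some.inj (h.star0_eq.symm.trans ha)
  have hvw : Fact0 (v ++ w) (v ++ p) b s := by
    obtain ⟨rfl, hb, hs⟩ := h
    refine ⟨by simp, ?_, ?_⟩
    · simpa [cont, hb] using hav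
    · intro x hx
      simp only [List.mem_append]
      grind
  rw [hvw.circ0_eq, hvw.star0_eq, h.circ0_eq, h.star0_eq]
  simp

theorem circ0_star0_append_of_mem [DecidableEq A] (v w : List A) (hw : w ≠ []) (a : A)
    (ha : star0 w = some a) (hav : a ∈ cont v) (p : List A) (hp : circ0 w = some p) :
    circ0 (v ++ w) = circ0 (v ++ p) ∧ star0 (v ++ w) = star0 (v ++ p) := by
  obtain ⟨p', b, s, h⟩ := exists_fact0 w hw
  obtain rfl : b = a := Option.some.inj (h.star0_eq.symm.trans ha)
  obtain rfl : p' = p := Option.some.inj (h.circ0_eq.symm.trans hp)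
  have hbv : b ∈ v := by simpa [cont] using hav
  obtain ⟨q, c, t, hq⟩ := exists_fact0 (v ++ p')
    (List.ne_nil_of_mem (List.mem_append_left _ hbv))
  -- The remainder `b s` of `w` adds no letter to `v p'`, so it is absorbed in the tail.
  have hvw : Fact0 (v ++ w) q c (t ++ b :: s) := by
    obtain ⟨rfl, hb, hs⟩ := h
    obtain ⟨he, hc, ht⟩ := hq
    refine ⟨by rw [← List.append_assoc, he]; simp, hc, ?_⟩
    have key : ∀ x ∈ v ++ p', x ∈ q ∨ x = c := by
      intro x hx
      rw [he, List.mem_append, List.mem_cons] at hx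
      grind
    intro x hx
    rw [List.mem_append, List.mem_cons] at hx
    rcases hx with hx | rfl | hx
    · exact ht x hx
    · exact key x (List.mem_append_left _ hbv)
    · rcases hs x hx with hx | rfl
      · exact key x (List.mem_append_right _ hx)
      · exact key x (List.mem_append_left _ hbv)
  rw [hvw.circ0_eq, hvw.star0_eq, hq.circ0_eq, hq.star0_eq]
  simp

/-- For nonempty `v, w ∈ A⁺`:
(a) if `w∗0 ∉ cont v` then `(vw)∘0 = v·(w∘0)` and `(vw)∗0 = w∗0`;
(b) if `w∗0 ∈ cont v` then `(vw)∘0 = (v·(w∘0))∘0` and `(vw)∗0 = (v·(w∘0))∗0`;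
(c) if `v∗1 ∉ cont w` then `(vw)∘1 = (v∘1)·w` and `(vw)∗1 = v∗1`;
(d) if `v∗1 ∈ cont w` then `(vw)∘1 = ((v∘1)·w)∘1` and `(vw)∗1 = ((v∘1)·w)∗1`. -/
theorem append_circ_star [Nonempty A] [DecidableEq A] (v w : List A)
    (hv : v ≠ []) (hw : w ≠ []) :
    (∀ a : A, star0 w = some a → a ∉ cont v →
      circ0 (v ++ w) = (circ0 w).map (fun p => v ++ p) ∧
      star0 (v ++ w) = star0 w) ∧
    (∀ a : A, star0 w = some a → a ∈ cont v →
      ∀ p : List A, circ0 w = some p →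
        circ0 (v ++ w) = circ0 (v ++ p) ∧ star0 (v ++ w) = star0 (v ++ p)) ∧
    (∀ a : A, star1 v = some a → a ∉ cont w →
      circ1 (v ++ w) = (circ1 v).map (fun s => s ++ w) ∧
      star1 (v ++ w) = star1 v) ∧
    (∀ a : A, star1 v = some a → a ∈ cont w →
      ∀ s : List A, circ1 v = some s →
        circ1 (v ++ w) = circ1 (s ++ w) ∧ star1 (v ++ w) = star1 (s ++ w)) := by
  have hcont : ∀ u : List A, cont u.reverse = cont u := fun u => by simp [cont]
  refine ⟨circ0_star0_append_of_notMem v w hw, circ0_star0_append_of_mem v w hw, ?_, ?_⟩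
  · intro a ha haw
    have h := circ0_star0_append_of_notMem w.reverse v.reverse (by simpa using hv) a ha
      (by rwa [hcont])
    rw [← List.reverse_append] at h
    refine ⟨?_, h.2⟩
    rw [circ1, circ1, h.1, Option.map_map, Option.map_map]
    congr 1
    funext p
    simp
  · intro a ha haw s hs
    obtain ⟨p, hp, rfl⟩ := Option.map_eq_some_iff.mp hs
    have h := circ0_star0_append_of_mem w.reverse v.reverse (by simpa using hv) a ha
      (by rwa [hcont]) p hp
    simp only [circ1, star1, h.1, h.2, List.reverse_append, List.reverse_reverse, and_self]

end FreeBand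
end

section
/- Let w ∈ A⁺ with w∗0 ≠ w∗1. Then there exist integers k, l > 0 such that w∗01^k = w∗1 and w∗10^l = w∗0. -/
/-!
For `β ∈ {0,1}` and a nonempty word `w`, the word `w ∘ β` is strictly shorter than `w` and contains
every letter of `w` except possibly `w ∗ β` (`circb_starb_spec`).  Iterating from
the same end until the word is empty, every letter of the original word is therefore produced by
`∗` at some step (`exists_replicate`).  Since `b ≠ w ∗ 0`, the letter `b` survives in `w ∘ 0`,
and applying this to the word `w ∘ 0` yields `k`; symmetrically for `l`.
-/

/-!
Common definitions: words over an alphabet `A` are `List A`; the free monoid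
operation is `++` with identity `[]`.  `false` plays the role of `0` and
`true` the role of `1` in `{0,1}*`.
-/

namespace FreeBand

variable {A : Type*}

/-- Every nonempty word splits at the first occurrence of the letter that appears last when
reading from the left: the prefix `p` before it contains all the other letters. -/
theorem exists_split [DecidableEq A] (w : List A) (hw : w ≠ []) :
    ∃ (p : List A) (c : A) (s : List A), w = p ++ c :: s ∧ c ∉ p ∧ ∀ x ∈ w, x ≠ c → x ∈ p := by
  induction w using List.reverseRecOn with
  | nil => exact absurd rfl hw
  | append_singleton v x ih =>
    by_cases hx : x ∈ v
    · obtain ⟨p, c, s, rfl, hc, hp⟩ := ih (List.ne_nil_of_mem hx)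
      refine ⟨p, c, s ++ [x], by simp, hc, fun y hy hyc => hp y ?_ hyc⟩
      rcases List.mem_append.1 hy with h | h
      · exact h
      · rwa [List.mem_singleton.1 h]
    · exact ⟨v, x, [], rfl, hx, fun y hy hyx => by simpa [hyx] using hy⟩

/-- The splitting of `exists_split` is the one that computes `prefLen`, because every prefix
longer than `p` already has the full content of the word. -/
theorem prefLen_eq [DecidableEq A] (p : List A) (c : A) (s : List A) (hc : c ∉ p)
    (hp : ∀ x ∈ p ++ c :: s, x ≠ c → x ∈ p) : prefLen (p ++ c :: s) = p.length := by
  have hcont : cont (p ++ c :: s) = insert c (cont p) := by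
    ext x
    have := hp x
    simp only [cont, List.mem_toFinset, Finset.mem_insert, List.mem_append, List.mem_cons] at *
    tauto
  have hcard : (cont (p ++ c :: s)).card = (cont p).card + 1 := by
    rw [hcont, Finset.card_insert_of_notMem (by simpa [cont] using hc)]
  unfold prefLen
  rw [Nat.findGreatest_eq_iff]
  refine ⟨by simp, fun _ => by simp [hcard], fun n hn _ h => ?_⟩
  obtain ⟨m, rfl⟩ : ∃ m, n = p.length + (m + 1) := ⟨n - p.length - 1, by omega⟩
  have hsub : insert c (cont p) ⊆ cont ((p ++ c :: s).take (p.length + (m + 1))) := by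
    intro x hx
    simp only [List.take_length_add_append, List.take_succ_cons]
    simp only [cont, List.mem_toFinset, Finset.mem_insert, List.mem_append, List.mem_cons] at *
    tauto
  have := Finset.card_le_card hsub
  rw [← hcont] at this
  omega

theorem circ0_star0_spec [DecidableEq A] (w : List A) (hw : w ≠ []) :
    ∃ (p : List A) (c : A), circ0 w = some p ∧ star0 w = some c ∧ p.length < w.length ∧
      ∀ x ∈ w, x ≠ c → x ∈ p := by
  obtain ⟨p, c, s, rfl, hc, hp⟩ := exists_split w hw
  have h := prefLen_eq p c s hc hp
  exact ⟨p, c, by simp [circ0, h], by simp [star0, h], by simp, hp⟩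

/-- Passing from `w` to `w ∘ d` shortens the word and loses no letter other than `w ∗ d`. -/
theorem circb_starb_spec [DecidableEq A] (w : List A) (hw : w ≠ []) (d : Bool) :
    ∃ (p : List A) (c : A), circb w d = some p ∧ starb w d = some c ∧ p.length < w.length ∧
      ∀ x ∈ w, x ≠ c → x ∈ p := by
  cases d with
  | false => exact circ0_star0_spec w hw
  | true =>
    obtain ⟨p, c, h1, h2, h3, h4⟩ := circ0_star0_spec w.reverse (by simpa using hw)
    exact ⟨p.reverse, c, by simp [circb, circ1, h1], h2, by simpa using h3,
      fun x hx hxc => by simpa using h4 x (by simpa using hx) hxc⟩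

theorem starw_cons_replicate [DecidableEq A] (w p : List A) (d e : Bool) (k : ℕ) (hk : 0 < k)
    (h : circb w d = some p) :
    starw w (d :: List.replicate k e) = starw p (List.replicate k e) := by
  obtain ⟨k, rfl⟩ : ∃ m, k = m + 1 := ⟨k - 1, by omega⟩
  simp [List.replicate_succ, starw, h]

/-- Every letter of a word is eventually removed when `∘ d` is iterated. -/
theorem exists_replicate [DecidableEq A] (d : Bool) (x : A) (w : List A) (hx : x ∈ w) :
    ∃ k : ℕ, 0 < k ∧ starw w (List.replicate k d) = some x := by
  obtain ⟨p, c, h1, h2, h3, h4⟩ := circb_starb_spec w (List.ne_nil_of_mem hx) d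
  by_cases hxc : x = c
  · exact ⟨1, one_pos, by simp [starw, h2, hxc]⟩
  · obtain ⟨k, hk, h⟩ := exists_replicate d x p (h4 x hx hxc)
    exact ⟨k + 1, k.succ_pos, by
      rw [List.replicate_succ, starw_cons_replicate w p d d k hk h1, h]⟩
termination_by w.length

theorem exists_cons_replicate [DecidableEq A] (w : List A) (d e : Bool) (x c : A) (hx : x ∈ w)
    (hc : starb w d = some c) (hxc : x ≠ c) :
    ∃ k : ℕ, 0 < k ∧ starw w (d :: List.replicate k e) = some x := by
  obtain ⟨p, c', h1, h2, -, h4⟩ := circb_starb_spec w (List.ne_nil_of_mem hx) d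
  obtain rfl : c = c' := Option.some.inj (hc.symm.trans h2)
  obtain ⟨k, hk, h⟩ := exists_replicate e x p (h4 x hx hxc)
  exact ⟨k, hk, by rw [starw_cons_replicate w p d e k hk h1, h]⟩

/-- If `w∗0 ≠ w∗1`, then there exist `k, l > 0` with `w∗01^k = w∗1` and
`w∗10^l = w∗0`. -/
theorem exists_k_l [Nonempty A] [DecidableEq A] (w : List A) (hw : w ≠ [])
    (a b : A) (ha : star0 w = some a) (hb : star1 w = some b) (hab : a ≠ b) :
    (∃ k : ℕ, 0 < k ∧ starw w (false :: List.replicate k true) = some b) ∧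
    (∃ l : ℕ, 0 < l ∧ starw w (true :: List.replicate l false) = some a) := by
  have haw : a ∈ w := List.mem_of_getElem? ha
  have hbw : b ∈ w := List.mem_reverse.1 (List.mem_of_getElem? hb)
  exact ⟨exists_cons_replicate w false true b a hbw ha hab.symm,
    exists_cons_replicate w true false a b haw hb hab⟩

end FreeBand
end
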